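/- arXiv:1607.07061 — 3 statements merged into one kernel-verified Lean document; each statement's English description precedes it below -/
import Mathlib

section
/- Let (X, τ₁, τ₂) be a bispace and let i, j ∈ {1,2} with i ≠ j. If A ⊆ X is (i,j)-semi preopen and B ∈ τ₁ ∩ τ₂, then A ∩ B is (i,j)-semi preopen. -/
/-- An Alexandroff space (σ-space) structure on `X`: a collection of "open" sets
containing `∅` and `X`, closed under countable unions and finite (binary) intersections. -/
structure AlexSpace (X : Type*) where
  opens : Set (Set X)
  empty_mem : ∅ ∈ opens
  univ_mem : Set.univ ∈ opens
  countable_sUnion_mem : ∀ S : Set (Set X), S.Countable → S ⊆ opens → ⋃₀ S ∈ opens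
  inter_mem : ∀ U V : Set X, U ∈ opens → V ∈ opens → U ∩ V ∈ opens

namespace AlexSpace

variable {X : Type*}

/-- A set is closed if its complement is open. -/
def IsClosed (τ : AlexSpace X) (F : Set X) : Prop := Fᶜ ∈ τ.opens

/-- The closure of `A`: the intersection of all closed sets containing `A`. -/
def cl (τ : AlexSpace X) (A : Set X) : Set X := ⋂₀ {F | τ.IsClosed F ∧ A ⊆ F}

/-- The interior of `A`: the union of all open sets contained in `A`. -/
def int (τ : AlexSpace X) (A : Set X) : Set X := ⋃₀ {U | U ∈ τ.opens ∧ U ⊆ A}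

end AlexSpace

/-- `A` is `(i,j)`-preopen w.r.t. the pair `(τi, τj)` if there is `U ∈ τi` with
`A ⊆ U ⊆ τj.cl A`. -/
def PreOpen {X : Type*} (τi τj : AlexSpace X) (A : Set X) : Prop :=
  ∃ U ∈ τi.opens, A ⊆ U ∧ U ⊆ τj.cl A

/-- `A` is `(i,j)`-semi preopen if there is an `(i,j)`-preopen `U` with `U ⊆ A ⊆ τj.cl U`. -/
def SemiPreOpen {X : Type*} (τi τj : AlexSpace X) (A : Set X) : Prop :=
  ∃ U, PreOpen τi τj U ∧ U ⊆ A ∧ A ⊆ τj.cl U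

namespace AlexSpace

variable {X : Type*} {τ : AlexSpace X}

theorem IsClosed.union {F G : Set X} (hF : τ.IsClosed F) (hG : τ.IsClosed G) :
    τ.IsClosed (F ∪ G) := by
  rw [AlexSpace.IsClosed, Set.compl_union]
  exact τ.inter_mem _ _ hF hG

theorem isClosed_compl_iff {B : Set X} : τ.IsClosed Bᶜ ↔ B ∈ τ.opens := by
  rw [AlexSpace.IsClosed, compl_compl]

theorem cl_minimal {A F : Set X} (hAF : A ⊆ F) (hF : τ.IsClosed F) : τ.cl A ⊆ F :=
  Set.sInter_subset_of_mem ⟨hF, hAF⟩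

-- `τ.cl (A ∩ B)` need not be `τ`-closed, so `cl_minimal` is applied to each closed superset `F`
-- of `A ∩ B` separately.
theorem cl_inter_subset_of_mem_opens (A : Set X) {B : Set X} (hB : B ∈ τ.opens) :
    τ.cl A ∩ B ⊆ τ.cl (A ∩ B) := by
  refine Set.subset_sInter ?_
  rintro F ⟨hF, hABF⟩
  rw [Set.inter_subset] at hABF ⊢
  exact cl_minimal hABF ((isClosed_compl_iff.mpr hB).union hF)

theorem inter_subset_cl_inter_of_subset_cl {A B C : Set X} (hCA : C ⊆ τ.cl A)
    (hB : B ∈ τ.opens) : C ∩ B ⊆ τ.cl (A ∩ B) :=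
  (Set.inter_subset_inter_left B hCA).trans (cl_inter_subset_of_mem_opens A hB)

end AlexSpace

theorem PreOpen.inter_of_mem_opens {X : Type*} {τi τj : AlexSpace X} {A B : Set X}
    (hA : PreOpen τi τj A) (hBi : B ∈ τi.opens) (hBj : B ∈ τj.opens) :
    PreOpen τi τj (A ∩ B) := by
  obtain ⟨U, hU, hAU, hUA⟩ := hA
  exact ⟨U ∩ B, τi.inter_mem U B hU hBi, Set.inter_subset_inter_left B hAU,
    AlexSpace.inter_subset_cl_inter_of_subset_cl hUA hBj⟩

theorem semiPreopen_inter_biopen {X : Type*} (τ : Fin 2 → AlexSpace X) (i j : Fin 2)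
    (hij : i ≠ j) (A B : Set X) (hA : SemiPreOpen (τ i) (τ j) A)
    (hBi : B ∈ (τ i).opens) (hBj : B ∈ (τ j).opens) :
    SemiPreOpen (τ i) (τ j) (A ∩ B) := by
  obtain ⟨U, hU, hUA, hAU⟩ := hA
  exact ⟨U ∩ B, hU.inter_of_mem_opens hBi hBj, Set.inter_subset_inter_left B hUA,
    AlexSpace.inter_subset_cl_inter_of_subset_cl hAU hBj⟩
end

section
/- Let (X, τ₁, τ₂) be a bispace, let i, j ∈ {1,2} with i ≠ j, let Y ∈ τᵢ, and let A ⊆ Y. If A is (τ_{i/Y}, τ_{j/Y})-preopen in the subbispace (Y, τ_{1/Y}, τ_{2/Y}), then A is (τᵢ, τⱼ)-preopen in X. -/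
/-- The trace (subspace) family on `Y`: sets of the form `U ∩ Y` with `U` open. -/
def traceOpens {X : Type*} (τ : AlexSpace X) (Y : Set X) : Set (Set X) :=
  {V | ∃ U ∈ τ.opens, V = U ∩ Y}

/-- The closure of `A ⊆ Y` in the trace structure on `Y`: the intersection of all
subsets of `Y` containing `A` whose complement in `Y` belongs to the trace family. -/
def traceCl {X : Type*} (τ : AlexSpace X) (Y A : Set X) : Set X :=
  ⋂₀ {F | A ⊆ F ∧ F ⊆ Y ∧ Y \ F ∈ traceOpens τ Y}

/-- `A ⊆ Y` is preopen in the subbispace structure on `Y` w.r.t. `(τi, τj)`: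
there is `W` in the trace family of `τi` with `A ⊆ W ⊆` trace-closure of `A` w.r.t. `τj`. -/
def TracePreOpen {X : Type*} (τi τj : AlexSpace X) (Y A : Set X) : Prop :=
  ∃ W ∈ traceOpens τi Y, A ⊆ W ∧ W ⊆ traceCl τj Y A

theorem AlexSpace.isClosed_univ {X : Type*} (τ : AlexSpace X) : τ.IsClosed Set.univ := by
  rw [AlexSpace.IsClosed, Set.compl_univ]
  exact τ.empty_mem

section Trace

variable {X : Type*} {τ : AlexSpace X} {Y A F : Set X}

theorem traceOpens_subset_opens (hY : Y ∈ τ.opens) : traceOpens τ Y ⊆ τ.opens := by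
  rintro _ ⟨U, hU, rfl⟩
  exact τ.inter_mem U Y hU hY

theorem sdiff_mem_traceOpens_iff (hFY : F ⊆ Y) :
    Y \ F ∈ traceOpens τ Y ↔ ∃ C, τ.IsClosed C ∧ F = C ∩ Y := by
  constructor
  · rintro ⟨U, hU, hYF⟩
    refine ⟨Uᶜ, by rwa [AlexSpace.IsClosed, compl_compl], ?_⟩
    calc
      F = Y \ (Y \ F) := (Set.sdiff_sdiff_cancel_left hFY).symm
      _ = Y \ (U ∩ Y) := by rw [hYF]
      _ = Uᶜ ∩ Y := by rw [Set.sdiff_inter_self_eq_sdiff, Set.sdiff_eq_compl_inter]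
  · rintro ⟨C, hC, rfl⟩
    exact ⟨Cᶜ, hC, by rw [Set.sdiff_inter_self_eq_sdiff, Set.sdiff_eq_compl_inter]⟩

theorem traceCl_eq_cl_inter (hAY : A ⊆ Y) : traceCl τ Y A = τ.cl A ∩ Y := by
  apply Set.Subset.antisymm
  · have traceCl_subset (C : Set X) (hC : τ.IsClosed C) (hAC : A ⊆ C) :
        traceCl τ Y A ⊆ C ∩ Y :=
      Set.sInter_subset_of_mem ⟨Set.subset_inter hAC hAY, Set.inter_subset_right,
        (sdiff_mem_traceOpens_iff Set.inter_subset_right).2 ⟨C, hC, rfl⟩⟩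
    exact Set.subset_inter
      (Set.subset_sInter fun C ⟨hC, hAC⟩ =>
        (traceCl_subset C hC hAC).trans Set.inter_subset_left)
      ((traceCl_subset Set.univ τ.isClosed_univ A.subset_univ).trans Set.inter_subset_right)
  · refine Set.subset_sInter fun F ⟨hAF, hFY, hF⟩ => ?_
    obtain ⟨C, hC, rfl⟩ := (sdiff_mem_traceOpens_iff hFY).1 hF
    exact Set.inter_subset_inter_left Y
      (Set.sInter_subset_of_mem ⟨hC, hAF.trans Set.inter_subset_left⟩)

end Trace

theorem preopen_of_trace_preopen {X : Type*} (τ : Fin 2 → AlexSpace X) (i j : Fin 2)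
    (hij : i ≠ j) (Y A : Set X) (hY : Y ∈ (τ i).opens) (hAY : A ⊆ Y)
    (hA : TracePreOpen (τ i) (τ j) Y A) :
    PreOpen (τ i) (τ j) A := by
  obtain ⟨W, hW, hAW, hWA⟩ := hA
  refine ⟨W, traceOpens_subset_opens hY hW, hAW, ?_⟩
  calc
    W ⊆ traceCl (τ j) Y A := hWA
    _ = (τ j).cl A ∩ Y := traceCl_eq_cl_inter hAY
    _ ⊆ (τ j).cl A := Set.inter_subset_left
end

section
/- Let f : (X, τ₁, τ₂) → (Y, σ₁, σ₂) be a pairwise precontinuous function between bispaces and let A ∈ τ₁ ∩ τ₂. Then the restriction of f to A is pairwise precontinuous as a map (A, τ_{1/A}, τ_{2/A}) → (Y, σ₁, σ₂); that is, for each i, j ∈ {1,2} with i ≠ j and each V ∈ σᵢ, the set f⁻¹(V) ∩ A is (τ_{i/A}, τ_{j/A})-preopen in the subbispace A. -/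
/-- `f` is pairwise precontinuous: for all `i ≠ j`, the preimage of every
`σ i`-open set is `(i,j)`-preopen in `X`. -/
def PairwisePreCont {X Y : Type*} (τ : Fin 2 → AlexSpace X) (σ : Fin 2 → AlexSpace Y)
    (f : X → Y) : Prop :=
  ∀ i j : Fin 2, i ≠ j → ∀ V ∈ (σ i).opens, PreOpen (τ i) (τ j) (f ⁻¹' V)

namespace AlexSpace

variable {X : Type*} {τ : AlexSpace X} {A S Y : Set X} {x : X}

theorem mem_cl_iff : x ∈ τ.cl S ↔ ∀ G ∈ τ.opens, x ∈ G → (G ∩ S).Nonempty := by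
  constructor
  · intro hx G hG hxG
    by_contra hGS
    have hSG : S ⊆ Gᶜ := fun p hpS hpG => hGS ⟨p, hpG, hpS⟩
    have hGc : τ.IsClosed Gᶜ := by rwa [IsClosed, compl_compl]
    exact hx Gᶜ ⟨hGc, hSG⟩ hxG
  · rintro hx F ⟨hF, hSF⟩
    by_contra hxF
    obtain ⟨p, hpF, hpS⟩ := hx Fᶜ hF hxF
    exact hpF (hSF hpS)

theorem cl_inter_subset_cl_inter (hA : A ∈ τ.opens) : τ.cl S ∩ A ⊆ τ.cl (S ∩ A) := by
  rintro x ⟨hx, hxA⟩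
  rw [mem_cl_iff] at hx ⊢
  intro G hG hxG
  obtain ⟨p, ⟨hpG, hpA⟩, hpS⟩ := hx (G ∩ A) (τ.inter_mem G A hG hA) ⟨hxG, hxA⟩
  exact ⟨p, hpG, hpS, hpA⟩

theorem traceCl_eq_cl_inter (hSY : S ⊆ Y) : traceCl τ Y S = τ.cl S ∩ Y := by
  apply Set.Subset.antisymm
  · have hY : Y \ Y ∈ traceOpens τ Y := ⟨∅, τ.empty_mem, by rw [Set.sdiff_self, Set.empty_inter]⟩
    refine Set.subset_inter ?_ (Set.sInter_subset_of_mem ⟨hSY, Set.Subset.rfl, hY⟩)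
    rintro x hx F ⟨hF, hSF⟩
    have hFY : Y \ (F ∩ Y) ∈ traceOpens τ Y :=
      ⟨Fᶜ, hF, by rw [Set.sdiff_inter_self_eq_sdiff, Set.sdiff_eq, Set.inter_comm]⟩
    exact (hx (F ∩ Y) ⟨Set.subset_inter hSF hSY, Set.inter_subset_right, hFY⟩).1
  · rintro x ⟨hx, hxY⟩ F ⟨hSF, -, G, hG, hFG⟩
    by_contra hxF
    have hxG : x ∈ G := (hFG.subset ⟨hxY, hxF⟩).1
    obtain ⟨p, hpG, hpS⟩ := mem_cl_iff.1 hx G hG hxG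
    exact (hFG.superset ⟨hpG, hSY hpS⟩).2 (hSF hpS)

end AlexSpace

theorem PreOpen.tracePreOpen_inter {X : Type*} {τi τj : AlexSpace X} {A S : Set X}
    (hS : PreOpen τi τj S) (hA : A ∈ τj.opens) : TracePreOpen τi τj A (S ∩ A) := by
  obtain ⟨U, hU, hSU, hUS⟩ := hS
  refine ⟨U ∩ A, ⟨U, hU, rfl⟩, Set.inter_subset_inter_left A hSU, ?_⟩
  rw [AlexSpace.traceCl_eq_cl_inter Set.inter_subset_right]
  refine Set.subset_inter ?_ Set.inter_subset_right
  calc U ∩ A ⊆ τj.cl S ∩ A := Set.inter_subset_inter_left A hUS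
    _ ⊆ τj.cl (S ∩ A) := AlexSpace.cl_inter_subset_cl_inter hA

theorem restriction_pairwisePreCont {X Y : Type*} (τ : Fin 2 → AlexSpace X)
    (σ : Fin 2 → AlexSpace Y) (f : X → Y) (hf : PairwisePreCont τ σ f)
    (A : Set X) (hA : ∀ k : Fin 2, A ∈ (τ k).opens) :
    ∀ i j : Fin 2, i ≠ j → ∀ V ∈ (σ i).opens,
      TracePreOpen (τ i) (τ j) A (f ⁻¹' V ∩ A) :=
  fun i j hij V hV => (hf i j hij V hV).tracePreOpen_inter (hA j)
end
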